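/- Let $(Z,\mathcal A)$ be a measurable space, $\mu$ a probability measure on $Z$, $\mu^n$ its $n$-fold product on $Z^n$, $\Theta$ a nonempty set, $M\ge 0$, and $\varphi:\Theta\times Z\to\mathbb R$ such that $z\mapsto\varphi(\theta,z)$ is measurable and bounded for each $\theta\in\Theta$, and $|\varphi(\theta,z)-\varphi(\theta,z')|\le M$ for all $\theta\in\Theta$ and $z,z'\in Z$. Fix integers $1\le q\le s\le n$ and put $$\gamma_j:=\binom{n}{s}^{-1}\sum_{l=0}^{q-1}\binom{j-1}{l}\binom{n-j}{s-l-1}\qquad(j=1,\dots,n),$$ where $\binom ab=0$ for $b>a$. For $D=(z_1,\dots,z_n)\in Z^n$ and $\theta\in\Theta$, order the indices $\{1,\dots,n\}$ as $(1),\dots,(n)$ so that $\varphi(\theta,z_{(1)})\ge\cdots\ge\varphi(\theta,z_{(n)})$ (ties broken by index order), define the ordered empirical loss $L_q(\theta;D):=\frac1q\sum_{j=1}^n\gamma_j\,\varphi(\theta,z_{(j)})$, and set $r_i(\theta;D):=\gamma_j$ for the unique $j$ with $(j)=i$. Define the Rademacher complexity $$R_n(\Theta):=\int_{Z^n}\Big[2^{-n}\sum_{\xi\in\{-1,1\}^n}\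 \sup_{\theta\in\Theta}\frac1n\sum_{i=1}^n\xi_i\,\varphi(\theta,z_i)\Big]\,d\mu^n(D)$$ and $$Q_n(\Theta;s,q):=\int_{Z^n}\Big[\inf_{\theta\in\Theta}\sum_{i=1}^n\Big(\frac{r_i(\theta;D)}{q}-\frac1n\Big)\varphi(\theta,z_i)\Big]\,d\mu^n(D).$$ Assume that, for every $\xi\in\{-1,1\}^n$, the function $D\mapsto\sup_{\theta\in\Theta}\frac1n\sum_{i=1}^n\xi_i\,\varphi(\theta,z_i)$ is finite $\mu^n$-almost everywhere, $\mu^n$-measurable and integrable, and that the integrand of $Q_n$ and the function $D\mapsto\sup_{\theta\in\Theta}\big(\int_Z\varphi(\theta,z)\,d\mu(z)-L_q(\theta;D)\big)$ are $\mu^n$-measurable and integrable. Then $Q_n(\Theta;s,q)\ge 0$, and for every $\delta\in(0,1)$, with $\mu^n$-probability at least $1-\delta$ over the draw of $D=(z_1,\dots,z_n)$, for all $\theta\in\Theta$: $$\int_Z\varphi(\theta,z)\,d\mu(z)\ \le\ L_q(\theta;D)+2R_n(\Theta)+\frac{Ms}{q}\sqrt{\frac{\ln(1/\delta)}{2n}}-Q_n(\Theta;s,q).$$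 (This is a generalization bound for ordered SGD, with $\varphi(\theta,z)$ playing the role of the loss $\ell(f(x;\theta),y)$ of the model on the sample $z=(x,y)$.) -/

import Mathlib

open MeasureTheory

noncomputable section

namespace OrderedLoss

/-- The coefficient `γ_j = (∑_{l=0}^{q-1} C(j-1, l) · C(n-j, s-l-1)) / C(n, s)`, for
`1 ≤ j ≤ n` and `1 ≤ q ≤ s ≤ n` (then no subtraction below is truncated). -/
def gamma (n s q j : ℕ) : ℝ :=
  (∑ l ∈ Finset.range q, ((j - 1).choose l : ℝ) * ((n - j).choose (s - l - 1) : ℝ))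
    / (n.choose s : ℝ)

variable {Z Θ : Type*} {n : ℕ}

/-- The permutation `j ↦ (j)` that lists the sample indices by decreasing loss, ties being broken
by index order. Positions and indices are counted from `0`, so `orderPerm φ θ D j` is the
index at the `(j+1)`-st place. (`Tuple.sort` sorts increasingly, with ties broken by index.) -/
def orderPerm (φ : Θ → Z → ℝ) (θ : Θ) (D : Fin n → Z) : Equiv.Perm (Fin n) :=
  Tuple.sort fun i => -φ θ (D i)

/-- The losses are listed in decreasing order. -/
theorem orderPerm_antitone (φ : Θ → Z → ℝ) (θ : Θ) (D : Fin n → Z) :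
    Antitone fun j => φ θ (D (orderPerm φ θ D j)) := fun _ _ h =>
  neg_le_neg_iff.1 (Tuple.monotone_sort (fun i => -φ θ (D i)) h)

/-- Among equal losses the smaller index comes first. -/
theorem orderPerm_lt_of_eq (φ : Θ → Z → ℝ) (θ : Θ) (D : Fin n → Z) {j k : Fin n} (hjk : j < k)
    (h : φ θ (D (orderPerm φ θ D j)) = φ θ (D (orderPerm φ θ D k))) :
    orderPerm φ θ D j < orderPerm φ θ D k :=
  (Tuple.eq_sort_iff.1 (rfl : orderPerm φ θ D = Tuple.sort fun i => -φ θ (D i))).2 j k hjk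
    (congrArg Neg.neg h)

/-- The ordered empirical loss `L_q(θ; D) = (1/q) ∑_j γ_j φ(θ, z_{(j)})`. -/
def orderedLoss (φ : Θ → Z → ℝ) (s q : ℕ) (θ : Θ) (D : Fin n → Z) : ℝ :=
  (1 / (q : ℝ)) * ∑ j : Fin n, gamma n s q (j + 1) * φ θ (D (orderPerm φ θ D j))

/-- The weight `r_i(θ; D) = γ_j`, where `j` is the place of the index `i`, i.e. `(j) = i`. -/
def rankWeight (φ : Θ → Z → ℝ) (s q : ℕ) (i : Fin n) (θ : Θ) (D : Fin n → Z) : ℝ :=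
  gamma n s q (((orderPerm φ θ D).symm i : ℕ) + 1)

/-- The signed average `(1/n) ∑_i ξ_i φ(θ, z_i)`, with signs `ξ_i ∈ ℤˣ = {-1, 1}`. -/
def signedAverage (φ : Θ → Z → ℝ) (ξ : Fin n → ℤˣ) (D : Fin n → Z) (θ : Θ) : ℝ :=
  (1 / (n : ℝ)) * ∑ i : Fin n, ((ξ i : ℤ) : ℝ) * φ θ (D i)

/-- `inf_θ ∑_i (r_i(θ; D)/q - 1/n) φ(θ, z_i)`, the integrand of `Q_n(Θ; s, q)`. -/
def gapInf (φ : Θ → Z → ℝ) (s q : ℕ) (D : Fin n → Z) : ℝ :=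
  ⨅ θ : Θ, ∑ i : Fin n, (rankWeight φ s q i θ D / (q : ℝ) - 1 / (n : ℝ)) * φ θ (D i)

variable [MeasurableSpace Z]

/-- The Rademacher complexity
`R_n(Θ) = ∫ 2^{-n} ∑_{ξ ∈ {-1,1}ⁿ} sup_θ (1/n) ∑_i ξ_i φ(θ, z_i) dμⁿ(D)`. -/
def rademacherComplexity (μ : Measure Z) (φ : Θ → Z → ℝ) (n : ℕ) : ℝ :=
  ∫ D : Fin n → Z, ((2 : ℝ) ^ n)⁻¹ * ∑ ξ : Fin n → ℤˣ, ⨆ θ : Θ, signedAverage φ ξ D θ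
    ∂(Measure.pi fun _ : Fin n => μ)

/-- `Q_n(Θ; s, q) = ∫ inf_θ ∑_i (r_i(θ; D)/q - 1/n) φ(θ, z_i) dμⁿ(D)`. -/
def gapQ (μ : Measure Z) (φ : Θ → Z → ℝ) (n s q : ℕ) : ℝ :=
  ∫ D : Fin n → Z, gapInf φ s q D ∂(Measure.pi fun _ : Fin n => μ)

end OrderedLoss

end

/-!
The weights `γ_j` are nonincreasing in `j` and sum to `q`, so Chebyshev's sum inequality gives
`L_q(θ; D) ≥ (1/n) ∑_i φ(θ, z_i)`. Hence `Q_n ≥ 0`, and `sup_θ (∫ φ(θ, z) dμ(z) - L_q(θ; D))` is at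
most `sup_θ (∫ φ(θ, z) dμ(z) - (1/n) ∑_i φ(θ, z_i))` minus the integrand of `Q_n`, so symmetrization
bounds its mean by `2 R_n - Q_n`. By the rearrangement inequality, replacing one sample point
changes `L_q` by at most `γ_1 M / q = M s / (q n)`, and McDiarmid's inequality bounds the deviation
of the supremum from its mean. McDiarmid's inequality is proved by integrating out one coordinate at
a time and applying Hoeffding's lemma to that coordinate.
-/

section ProductMeasure

variable {ι : Type*} [Fintype ι] {α : ι → Type*} [∀ i, MeasurableSpace (α i)]
  (μ : ∀ i, Measure (α i)) [∀ i, IsProbabilityMeasure (μ i)]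

theorem measurePreserving_piecewise (s : Set ι) [∀ i, Decidable (i ∈ s)] :
    MeasurePreserving (fun x : (∀ i, α i) × (∀ i, α i) => s.piecewise x.1 x.2)
      ((Measure.pi μ).prod (Measure.pi μ)) (Measure.pi μ) := by
  have hm : Measurable fun x : (∀ i, α i) × (∀ i, α i) => s.piecewise x.1 x.2 := by
    refine measurable_pi_lambda _ fun i => ?_
    by_cases hi : i ∈ s <;> simp only [Set.piecewise, hi, if_true, if_false] <;> fun_prop
  refine ⟨hm, (Measure.pi_eq fun t ht => ?_).symm⟩
  have hpre : (fun x : (∀ i, α i) × (∀ i, α i) => s.piecewise x.1 x.2) ⁻¹' Set.univ.pi t =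
      Set.univ.pi (s.piecewise t fun _ => Set.univ) ×ˢ
        Set.univ.pi (s.piecewise (fun _ => Set.univ) t) := by
    ext x
    simp only [Set.mem_preimage, Set.mem_univ_pi, Set.mem_prod, ← forall_and]
    refine forall_congr' fun i => ?_
    by_cases hi : i ∈ s <;> simp [hi]
  rw [Measure.map_apply hm (.univ_pi ht), hpre, Measure.prod_prod, Measure.pi_pi, Measure.pi_pi,
    ← Finset.prod_mul_distrib]
  refine Finset.prod_congr rfl fun i _ => ?_
  by_cases hi : i ∈ s <;> simp [hi]

theorem measurePreserving_update [DecidableEq ι] (i : ι) :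
    MeasurePreserving (fun x : (∀ i, α i) × α i => Function.update x.1 i x.2)
      ((Measure.pi μ).prod (μ i)) (Measure.pi μ) := by
  have hm : Measurable fun x : (∀ i, α i) × α i => Function.update x.1 i x.2 :=
    measurable_pi_lambda _ fun j => by
      by_cases hj : j = i
      · subst hj; simpa using measurable_snd
      · simp only [Function.update_of_ne hj]; fun_prop
  have h := measurePreserving_piecewise μ {i}ᶜ
  have hprod := (MeasurePreserving.id (Measure.pi μ)).prod (measurePreserving_eval μ i)
  refine ⟨hm, Eq.trans ?_ h.map_eq⟩
  rw [← hprod.map_eq, Measure.map_map hm hprod.measurable]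
  congr 1
  ext x j
  by_cases hj : j = i
  · subst hj; simp
  · simp [hj]

theorem measurePreserving_finCons {n : ℕ} {α : Fin (n + 1) → Type*} [∀ i, MeasurableSpace (α i)]
    (μ : ∀ i, Measure (α i)) [∀ i, IsProbabilityMeasure (μ i)] :
    MeasurePreserving (fun x : (∀ i : Fin n, α i.succ) × α 0 => (Fin.cons x.2 x.1 : ∀ i, α i))
      ((Measure.pi fun i => μ (Fin.succ i)).prod (μ 0)) (Measure.pi μ) := by
  have h := (measurePreserving_piFinSuccAbove μ 0).symm.comp Measure.measurePreserving_swap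
  have hcons : (fun x : (∀ i : Fin n, α i.succ) × α 0 => (Fin.cons x.2 x.1 : ∀ i, α i)) =
      (MeasurableEquiv.piFinSuccAbove α 0).symm ∘ Prod.swap :=
    funext fun x => (Fin.insertNth_zero ..).symm
  exact hcons ▸ h

end ProductMeasure

section SubGaussian

open ProbabilityTheory
open scoped NNReal

variable {α β : Type*} [MeasurableSpace α] [MeasurableSpace β] {μ : Measure α} {ν : Measure β}

theorem hasSubgaussianMGF_of_ae_abs_sub_le [IsProbabilityMeasure μ] {X : α → ℝ}
    (hX : AEMeasurable X μ) {c : ℝ≥0} (h : ∀ᵐ p ∂μ.prod μ, |X p.1 - X p.2| ≤ c) :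
    HasSubgaussianMGF (fun a => X a - μ[X]) ((c / 2) ^ 2) μ := by
  have hae : ∀ᵐ a ∂μ, ∀ᵐ b ∂μ, |X a - X b| ≤ c := Measure.ae_ae_of_ae_prod h
  obtain ⟨a₀, ha₀⟩ := hae.exists
  have hbdd : Filter.IsBoundedUnder (· ≤ ·) (ae μ) X :=
    Filter.isBoundedUnder_of_eventually_le (a := X a₀ + c) <| by
      filter_upwards [ha₀] with b hb
      linarith [(abs_le.1 hb).1]
  have hcobdd : Filter.IsCoboundedUnder (· ≤ ·) (ae μ) X :=
    (Filter.isBoundedUnder_of_eventually_ge (a := X a₀ - c) <| by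
      filter_upwards [ha₀] with b hb
      linarith [(abs_le.1 hb).2]).isCoboundedUnder_le
  have hmem : ∀ᵐ a ∂μ, X a ∈ Set.Icc (essSup X μ - c) (essSup X μ) := by
    filter_upwards [ae_le_essSup hbdd, hae] with a ha_le ha
    have hsup : essSup X μ ≤ X a + c := essSup_le_of_ae_le _ (by
      filter_upwards [ha] with b hb
      linarith [(abs_le.1 hb).1]) hcobdd
    exact ⟨by linarith, ha_le⟩
  simpa using hasSubgaussianMGF_of_mem_Icc hX hmem

theorem hasSubgaussianMGF_add_of_ae_section [SFinite μ] [SFinite ν] {X : α → ℝ}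
    {Y : α × β → ℝ} {cX cY : ℝ≥0}
    (hX : HasSubgaussianMGF X cX μ) (hYm : AEStronglyMeasurable Y (μ.prod ν))
    (hY : ∀ᵐ a ∂μ, HasSubgaussianMGF (fun b => Y (a, b)) cY ν) :
    HasSubgaussianMGF (fun p => X p.1 + Y p) (cX + cY) (μ.prod ν) := by
  have hexp (t : ℝ) (p : α × β) :
      Real.exp (t * (X p.1 + Y p)) = Real.exp (t * X p.1) * Real.exp (t * Y p) := by
    rw [mul_add, Real.exp_add]
  have hsec (t : ℝ) : ∀ᵐ a ∂μ, ∫ b, Real.exp (t * (X a + Y (a, b))) ∂ν ≤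
      Real.exp (t * X a) * Real.exp (cY * t ^ 2 / 2) := by
    filter_upwards [hY] with a ha
    simp only [hexp t (a, _), integral_const_mul]
    gcongr
    exact ha.mgf_le t
  have hdom (t : ℝ) := (hX.integrable_exp_mul t).mul_const (Real.exp (cY * t ^ 2 / 2))
  have hint (t : ℝ) : Integrable (fun p => Real.exp (t * (X p.1 + Y p))) (μ.prod ν) := by
    have hm : AEStronglyMeasurable (fun p => Real.exp (t * (X p.1 + Y p))) (μ.prod ν) :=
      Real.continuous_exp.comp_aestronglyMeasurable
        ((hX.aestronglyMeasurable.comp_fst.add hYm).const_mul t)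
    refine (integrable_prod_iff hm).2 ⟨?_, (hdom t).mono' hm.norm.integral_prod_right' ?_⟩
    · filter_upwards [hY] with a ha
      simpa only [hexp t (a, _)] using (ha.integrable_exp_mul t).const_mul (Real.exp (t * X a))
    · filter_upwards [hsec t] with a ha
      simp only [Real.norm_eq_abs, Real.abs_exp]
      rwa [abs_of_nonneg (by positivity)]
  refine ⟨hint, fun t => ?_⟩
  calc mgf (fun p => X p.1 + Y p) (μ.prod ν) t
      = ∫ a, ∫ b, Real.exp (t * (X a + Y (a, b))) ∂ν ∂μ := integral_prod _ (hint t)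
    _ ≤ ∫ a, Real.exp (t * X a) * Real.exp (cY * t ^ 2 / 2) ∂μ :=
      integral_mono_ae (hint t).integral_prod_left (hdom t) (hsec t)
    _ = mgf X μ t * Real.exp (cY * t ^ 2 / 2) := integral_mul_const _ _
    _ ≤ Real.exp (cX * t ^ 2 / 2) * Real.exp (cY * t ^ 2 / 2) := by
      gcongr
      exact hX.mgf_le t
    _ = Real.exp (↑(cX + cY) * t ^ 2 / 2) := by
      rw [← Real.exp_add, NNReal.coe_add, add_mul, add_div]

theorem integral_comp_of_measurePreserving {E : Type*} [NormedAddCommGroup E] [NormedSpace ℝ E]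
    {g : α → β} (hg : MeasurePreserving g μ ν) {f : β → E} (hf : AEStronglyMeasurable f ν) :
    ∫ a, f (g a) ∂μ = ∫ b, f b ∂ν := by
  rw [← hg.map_eq, integral_map hg.aemeasurable (hg.map_eq.symm ▸ hf)]

theorem hasSubgaussianMGF_of_comp_measurePreserving {g : α → β} (hg : MeasurePreserving g μ ν)
    {X : β → ℝ} (hX : AEMeasurable X ν) {c : ℝ≥0} (h : HasSubgaussianMGF (X ∘ g) c μ) :
    HasSubgaussianMGF X c ν :=
  h.congr_identDistrib ⟨h.aemeasurable, hX, by
    rw [← AEMeasurable.map_map_of_aemeasurable (hg.map_eq.symm ▸ hX) hg.aemeasurable, hg.map_eq]⟩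

theorem ae_abs_integral_sub_integral_le {γ : Type*} [MeasurableSpace γ] {σ : Measure γ}
    [SFinite μ] [IsProbabilityMeasure ν] {S T : γ → α} (hS : MeasurePreserving S σ μ)
    (hT : MeasurePreserving T σ μ) {f : α × β → ℝ} (hf : Integrable f (μ.prod ν)) {c : ℝ}
    (h : ∀ᵐ x ∂σ.prod ν, |f (S x.1, x.2) - f (T x.1, x.2)| ≤ c) :
    ∀ᵐ x ∂σ, |∫ b, f (S x, b) ∂ν - ∫ b, f (T x, b) ∂ν| ≤ c := by
  filter_upwards [Measure.ae_ae_of_ae_prod h, hS.quasiMeasurePreserving.ae hf.prod_right_ae,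
    hT.quasiMeasurePreserving.ae hf.prod_right_ae] with x hx hSx hTx
  rw [← integral_sub hSx hTx]
  simpa using norm_integral_le_of_norm_le_const (μ := ν)
    (f := fun b => f (S x, b) - f (T x, b)) hx

theorem hasSubgaussianMGF_of_ae_abs_sub_update_le_fin {n : ℕ} {α : Fin n → Type*}
    [∀ i, MeasurableSpace (α i)] {μ : ∀ i, Measure (α i)} [∀ i, IsProbabilityMeasure (μ i)]
    {f : (∀ i, α i) → ℝ} (hf : Integrable f (Measure.pi μ)) (c : Fin n → ℝ≥0)
    (h : ∀ i, ∀ᵐ x ∂(Measure.pi μ).prod (μ i), |f x.1 - f (Function.update x.1 i x.2)| ≤ c i) :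
    HasSubgaussianMGF (fun x => f x - ∫ y, f y ∂Measure.pi μ) (∑ i, (c i / 2) ^ 2)
      (Measure.pi μ) := by
  induction n with
  | zero =>
    have hconst (x) : f x - ∫ y, f y ∂Measure.pi μ = 0 := by
      rw [show f = fun _ => f x from funext fun y => congrArg f (Subsingleton.elim y x)]
      simp
    simp [hconst]
  | succ n ih =>
    set π := Measure.pi fun i => μ (Fin.succ i)
    have hcons : MeasurePreserving _ (π.prod (μ 0)) _ := measurePreserving_finCons μ
    set F : (∀ i : Fin n, α i.succ) × α 0 → ℝ := fun x => f (Fin.cons x.2 x.1)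
    have hF : Integrable F (π.prod (μ 0)) := hcons.integrable_comp_of_integrable hf
    have hcons_diff (i) : ∀ᵐ x ∂π.prod ((μ 0).prod (μ i)),
        |F (x.1, x.2.1) - f (Function.update (Fin.cons x.2.1 x.1) i x.2.2)| ≤ c i :=
      ((hcons.prod (.id (μ i))).comp
        (measurePreserving_prodAssoc π (μ 0) (μ i)).symm).quasiMeasurePreserving.ae (h i)
    have htail : HasSubgaussianMGF (fun x => ∫ z, F (x, z) ∂μ 0 - ∫ y, ∫ z, F (y, z) ∂μ 0 ∂π)
        (∑ i : Fin n, (c i.succ / 2) ^ 2) π := by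
      refine ih hF.integral_prod_left _ fun i => ?_
      refine ae_abs_integral_sub_integral_le measurePreserving_fst
        (measurePreserving_update (fun i => μ (Fin.succ i)) i) hF ?_
      have hswap := ((MeasurePreserving.id π).prod Measure.measurePreserving_swap).comp
        (measurePreserving_prodAssoc π (μ i.succ) (μ 0))
      filter_upwards [hswap.quasiMeasurePreserving.ae (hcons_diff i.succ)] with x hx
      simpa only [F, Fin.cons_update] using! hx
    have hhead : ∀ᵐ x ∂π, HasSubgaussianMGF (fun z => F (x, z) - ∫ z, F (x, z) ∂μ 0)
        ((c 0 / 2) ^ 2) (μ 0) := by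
      filter_upwards [hF.prod_right_ae, Measure.ae_ae_of_ae_prod (hcons_diff 0)] with x hx hdiff
      exact hasSubgaussianMGF_of_ae_abs_sub_le hx.aemeasurable <| by
        simpa only [F, Fin.update_cons_zero] using hdiff
    have hmean : ∫ x, ∫ z, F (x, z) ∂μ 0 ∂π = ∫ y, f y ∂Measure.pi μ := by
      rw [← integral_prod F hF]
      exact integral_comp_of_measurePreserving hcons hf.aestronglyMeasurable
    refine hasSubgaussianMGF_of_comp_measurePreserving hcons (hf.aemeasurable.sub_const _) ?_
    convert hasSubgaussianMGF_add_of_ae_section htail (hF.aestronglyMeasurable.sub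
      hF.integral_prod_left.aestronglyMeasurable.comp_fst) hhead using 1
    · ext x
      simp [F, hmean]
    · rw [Fin.sum_univ_succ, add_comm]

theorem hasSubgaussianMGF_of_ae_abs_sub_update_le {ι : Type*} [Fintype ι] [DecidableEq ι]
    {α : ι → Type*} [∀ i, MeasurableSpace (α i)] {μ : ∀ i, Measure (α i)}
    [∀ i, IsProbabilityMeasure (μ i)] {f : (∀ i, α i) → ℝ} (hf : Integrable f (Measure.pi μ))
    (c : ι → ℝ≥0)
    (h : ∀ i, ∀ᵐ x ∂(Measure.pi μ).prod (μ i), |f x.1 - f (Function.update x.1 i x.2)| ≤ c i) :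
    HasSubgaussianMGF (fun x => f x - ∫ y, f y ∂Measure.pi μ) (∑ i, (c i / 2) ^ 2)
      (Measure.pi μ) := by
  let e := Fintype.equivFin ι
  have he := measurePreserving_piCongrLeft μ e.symm
  refine hasSubgaussianMGF_of_comp_measurePreserving he (hf.aemeasurable.sub_const _) ?_
  have hfin := hasSubgaussianMGF_of_ae_abs_sub_update_le_fin (he.integrable_comp_of_integrable hf)
    (c ∘ e.symm) fun k => by
      filter_upwards [(he.prod (.id (μ (e.symm k)))).quasiMeasurePreserving.ae (h (e.symm k))]
        with x hx
      have hupd := Function.piCongrLeft'_symm_update α e x.1 k x.2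
      simpa [MeasurableEquiv.piCongrLeft, Equiv.piCongrLeft, hupd] using hx
  convert hfin using 1
  · ext x
    simp [← integral_comp_of_measurePreserving he hf.aestronglyMeasurable]
  · exact (Equiv.sum_comp e.symm fun i => (c i / 2) ^ 2).symm

theorem measureReal_lt_le_of_hasSubgaussianMGF [IsProbabilityMeasure μ] {X : α → ℝ} {c : ℝ≥0}
    (h : HasSubgaussianMGF X c μ) {δ : ℝ} (hδ : 0 < δ) (hδ1 : δ ≤ 1) :
    μ.real {a | √(2 * c * Real.log (1 / δ)) < X a} ≤ δ := by
  rcases eq_or_ne c 0 with rfl | hc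
  · have h0 : μ.real {a | √(2 * (0 : ℝ≥0) * Real.log (1 / δ)) < X a} = 0 := by
      refine (measureReal_eq_zero_iff).2 (measure_eq_zero_iff_ae_notMem.2 ?_)
      filter_upwards [h.ae_eq_zero_of_hasSubgaussianMGF_zero] with a ha
      simp [ha]
    exact h0.trans_le hδ.le
  have hlog : 0 ≤ Real.log (1 / δ) := Real.log_nonneg (one_le_one_div hδ hδ1)
  calc μ.real {a | √(2 * c * Real.log (1 / δ)) < X a}
      ≤ μ.real {a | √(2 * c * Real.log (1 / δ)) ≤ X a} :=
        measureReal_mono (Set.ofPred_subset_ofPred.2 fun _ => le_of_lt)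
    _ ≤ Real.exp (-√(2 * c * Real.log (1 / δ)) ^ 2 / (2 * c)) := h.measure_ge_le (by positivity)
    _ = δ := by
      rw [Real.sq_sqrt (by positivity), ← mul_neg, mul_div_cancel_left₀ _ (by positivity),
        one_div, Real.log_inv, neg_neg, Real.exp_log hδ]

theorem ofReal_one_sub_le_measure_of_measureReal_compl_le [IsProbabilityMeasure μ] {s : Set α}
    {δ : ℝ} (h : μ.real sᶜ ≤ δ) : ENNReal.ofReal (1 - δ) ≤ μ s := by
  refine ENNReal.ofReal_le_of_le_toReal ?_
  have hunion := measureReal_union_le (μ := μ) s sᶜ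
  rw [Set.union_compl_self, probReal_univ] at hunion
  change 1 - δ ≤ μ.real s
  linarith

end SubGaussian

section SortedSum

variable {R : Type*} [CommRing R] [LinearOrder R] {n : ℕ}

/-- The weighted sum `∑ j, w j * x₍ⱼ₎`, where `x₍₀₎ ≥ x₍₁₎ ≥ ⋯` lists the values of `x` in
decreasing order, ties being broken by index. -/
def sortedSum (w x : Fin n → R) : R :=
  ∑ j, w j * x (Tuple.sort (fun i => -x i) j)

variable [IsStrictOrderedRing R] {w x y : Fin n → R}

theorem antitone_comp_sort_neg (x : Fin n → R) :
    Antitone fun j => x (Tuple.sort (fun i => -x i) j) := fun _ _ h =>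
  neg_le_neg_iff.1 (Tuple.monotone_sort (fun i => -x i) h)

theorem sum_mul_comp_perm_le_sortedSum (hw : Antitone w) (x : Fin n → R)
    (σ : Equiv.Perm (Fin n)) : ∑ j, w j * x (σ j) ≤ sortedSum w x := by
  have h := (hw.monovary (antitone_comp_sort_neg x)).sum_mul_comp_perm_le_sum_mul
    (σ := σ.trans (Tuple.sort fun i => -x i).symm)
  simpa [sortedSum] using h

theorem exists_sortedSum_sub_le (hw : Antitone w) {i : Fin n} (hxy : ∀ k ≠ i, x k = y k) :
    ∃ j, sortedSum w x - sortedSum w y ≤ w j * (x i - y i) := by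
  set σ := Tuple.sort fun i => -x i
  refine ⟨σ.symm i, ?_⟩
  calc sortedSum w x - sortedSum w y
      ≤ ∑ j, w j * x (σ j) - ∑ j, w j * y (σ j) :=
        sub_le_sub_left (sum_mul_comp_perm_le_sortedSum hw y σ) _
    _ = ∑ j, w j * (x (σ j) - y (σ j)) := by simp only [mul_sub, Finset.sum_sub_distrib]
    _ = w (σ.symm i) * (x (σ (σ.symm i)) - y (σ (σ.symm i))) :=
        Fintype.sum_eq_single _ fun j hj => by
          rw [hxy _ (by rwa [Ne, ← Equiv.eq_symm_apply]), sub_self, mul_zero]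
    _ = w (σ.symm i) * (x i - y i) := by rw [Equiv.apply_symm_apply]

theorem sum_mul_sum_le_card_mul_sortedSum (hw : Antitone w) (x : Fin n → R) :
    (∑ j, w j) * ∑ i, x i ≤ n * sortedSum w x := by
  have h := (hw.monovary (antitone_comp_sort_neg x)).sum_mul_sum_le_card_mul_sum
  rwa [Equiv.sum_comp (Tuple.sort fun i => -x i) x, Fintype.card_fin] at h

theorem abs_sum_mul_sub_sortedSum_le (hw : ∀ j, 0 ≤ w j) {a b : R} (hx : ∀ i, |a - x i| ≤ b) :
    |(∑ j, w j) * a - sortedSum w x| ≤ (∑ j, w j) * b := by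
  rw [sortedSum, Finset.sum_mul, Finset.sum_mul, ← Finset.sum_sub_distrib]
  refine (Finset.abs_sum_le_sum_abs _ _).trans (Finset.sum_le_sum fun j _ => ?_)
  rw [← mul_sub, abs_mul, abs_of_nonneg (hw j)]
  exact mul_le_mul_of_nonneg_left (hx _) (hw j)

end SortedSum

section Binomial

theorem sum_antidiagonal_choose_mul_choose (n a b : ℕ) :
    ∑ ij ∈ Finset.HasAntidiagonal.antidiagonal n, ij.1.choose a * ij.2.choose b =
      (n + 1).choose (a + b + 1) := by
  induction n generalizing b with
  | zero => rcases a with _ | a <;> rcases b with _ | b <;> simp [Nat.choose_eq_zero_of_lt]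
  | succ n ih =>
    rw [Finset.Nat.sum_antidiagonal_succ']
    cases b with
    | zero =>
      have ih₀ := ih 0
      simp only [Nat.choose_zero_right, mul_one] at ih₀ ⊢
      rw [ih₀, Nat.choose_succ_succ (n + 1) (a + 0)]
      rfl
    | succ b =>
      simp only [Nat.choose_succ_succ _ b, mul_add, Finset.sum_add_distrib, ih b, ih (b + 1),
        Nat.choose_zero_succ, mul_zero, zero_add]
      rw [← add_assoc a b 1, Nat.choose_succ_succ (n + 1) (a + b + 1)]

theorem sum_choose_mul_choose_add (m N k d : ℕ) :
    ∑ l ∈ Finset.range (k + 1), (m + 1).choose l * N.choose (k + 1 + d - l) +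
        m.choose k * N.choose d =
      ∑ l ∈ Finset.range (k + 1), m.choose l * (N + 1).choose (k + 1 + d - l) := by
  induction k generalizing d with
  | zero => simp [add_comm 1 d, Nat.choose_succ_succ, add_comm]
  | succ k ih =>
    have hd : k + 1 + 1 + d = k + 1 + (d + 1) := by ring
    rw [Finset.sum_range_succ, Finset.sum_range_succ _ (k + 1), hd, ← ih (d + 1),
      Nat.add_sub_cancel_left, Nat.choose_succ_succ' m, Nat.choose_succ_succ' N]
    ring

theorem sum_choose_succ_mul_choose_le (m N : ℕ) {k t : ℕ} (hkt : k ≤ t) :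
    ∑ l ∈ Finset.range (k + 1), (m + 1).choose l * N.choose (t - l) ≤
      ∑ l ∈ Finset.range (k + 1), m.choose l * (N + 1).choose (t - l) := by
  rcases hkt.lt_or_eq with hlt | rfl
  · obtain ⟨d, rfl⟩ := Nat.exists_eq_add_of_le (Nat.succ_le_of_lt hlt)
    exact le_of_add_le_left (sum_choose_mul_choose_add m N k d).le
  · have vandermonde (a b : ℕ) :
        ∑ l ∈ Finset.range (k + 1), a.choose l * b.choose (k - l) = (a + b).choose k := by
      rw [Nat.add_choose_eq, Finset.Nat.sum_antidiagonal_eq_sum_range_succ_mk]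
    rw [vandermonde, vandermonde, Nat.add_right_comm, Nat.add_assoc]

end Binomial

namespace OrderedLoss

section Gamma

variable {n s q : ℕ}

theorem gamma_nonneg (n s q j : ℕ) : 0 ≤ gamma n s q j := by
  unfold gamma
  positivity

theorem sum_gamma (hqs : q ≤ s) (hsn : s ≤ n) : ∑ j : Fin n, gamma n s q (j + 1) = q := by
  rcases n with _ | n
  · obtain rfl : q = 0 := by lia
    simp
  have hchoose : ((n + 1).choose s : ℝ) ≠ 0 := by exact_mod_cast (Nat.choose_pos hsn).ne'
  have hinner : ∀ l ∈ Finset.range q,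
      ∑ j : Fin (n + 1), ((j.val + 1 - 1).choose l : ℝ) * (n + 1 - (j + 1)).choose (s - l - 1) =
        (n + 1).choose s := fun l hl => by
    have hl : l + (s - l - 1) + 1 = s := by grind
    have h := sum_antidiagonal_choose_mul_choose n l (s - l - 1)
    rw [hl, Finset.Nat.sum_antidiagonal_eq_sum_range_succ_mk, ← Fin.sum_univ_eq_sum_range
      (fun i => i.choose l * (n - i).choose (s - l - 1))] at h
    simpa using mod_cast h
  simp only [gamma]
  rw [← Finset.sum_div, div_eq_iff hchoose, Finset.sum_comm, Finset.sum_congr rfl hinner]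
  simp

theorem gamma_antitone (hq : 1 ≤ q) (hqs : q ≤ s) :
    Antitone fun j : Fin n => gamma n s q (j + 1) := by
  rcases n with _ | n
  · exact Subsingleton.antitone _
  rw [Fin.antitone_iff_succ_le]
  intro i
  have h := sum_choose_succ_mul_choose_le i (n - (i + 1)) (k := q - 1) (t := s - 1) (by lia)
  have hsub : n + 1 - (i + 1) = n - (i + 1) + 1 := by lia
  simp only [gamma, Fin.val_succ, Fin.val_castSucc, Nat.add_sub_cancel, Nat.add_sub_add_right,
    Nat.sub_right_comm s _ 1]
  rw [Nat.sub_add_cancel hq, ← hsub, Nat.add_sub_add_right] at h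
  gcongr ?_ / _
  exact_mod_cast h

theorem gamma_one (hq : 1 ≤ q) (hqs : q ≤ s) (hsn : s ≤ n) : gamma n s q 1 = s / n := by
  obtain ⟨n, rfl⟩ : ∃ m, n = m + 1 := ⟨n - 1, by lia⟩
  obtain ⟨s, rfl⟩ : ∃ m, s = m + 1 := ⟨s - 1, by lia⟩
  obtain ⟨q, rfl⟩ : ∃ m, q = m + 1 := ⟨q - 1, by lia⟩
  have hchoose : ((n + 1).choose (s + 1) : ℝ) ≠ 0 := by exact_mod_cast (Nat.choose_pos hsn).ne'
  have habsorb : ((n + 1 : ℕ) : ℝ) * n.choose s = (n + 1).choose (s + 1) * (s + 1 : ℕ) :=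
    mod_cast Nat.add_one_mul_choose_eq n s
  have hgamma : gamma (n + 1) (s + 1) (q + 1) 1 = n.choose s / (n + 1).choose (s + 1) := by
    simp [gamma, Finset.sum_range_succ']
  rw [hgamma, div_eq_div_iff hchoose (by positivity)]
  linarith

theorem gamma_le (hq : 1 ≤ q) (hqs : q ≤ s) (hsn : s ≤ n) (j : Fin n) :
    gamma n s q (j + 1) ≤ s / n := by
  have h := gamma_antitone (n := n) hq hqs (show (⟨0, j.pos⟩ : Fin n) ≤ j from Nat.zero_le _)
  simpa [gamma_one hq hqs hsn] using h

end Gamma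
section Loss

variable {Z Θ : Type*} {n s q : ℕ} {φ : Θ → Z → ℝ} {θ : Θ} {M : ℝ}

/-- The empirical mean `(1/n) ∑_i φ(θ, z_i)` of the loss over the sample `D = (z_1, …, z_n)`. -/
noncomputable def empiricalLoss (φ : Θ → Z → ℝ) (θ : Θ) (D : Fin n → Z) : ℝ :=
  (1 / (n : ℝ)) * ∑ i, φ θ (D i)

theorem orderedLoss_eq_sortedSum (φ : Θ → Z → ℝ) (s q : ℕ) (θ : Θ) (D : Fin n → Z) :
    orderedLoss φ s q θ D =
      (1 / (q : ℝ)) * sortedSum (fun j : Fin n => gamma n s q (j + 1)) fun i => φ θ (D i) :=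
  rfl

theorem orderedLoss_sub_le (hM : ∀ z z', |φ θ z - φ θ z'| ≤ M) (hq : 1 ≤ q) (hqs : q ≤ s)
    (hsn : s ≤ n) {D D' : Fin n → Z} {i : Fin n} (hD : ∀ k ≠ i, D k = D' k) :
    orderedLoss φ s q θ D - orderedLoss φ s q θ D' ≤ M * s / (q * n) := by
  obtain ⟨j, hj⟩ := exists_sortedSum_sub_le (gamma_antitone hq hqs)
    (x := fun k => φ θ (D k)) (y := fun k => φ θ (D' k)) fun k hk => by rw [hD k hk]
  have hM0 : 0 ≤ M := (abs_nonneg _).trans (hM (D i) (D i))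
  rw [orderedLoss_eq_sortedSum, orderedLoss_eq_sortedSum, ← mul_sub]
  calc (1 / (q : ℝ)) * _ ≤ 1 / q * (gamma n s q (j + 1) * (φ θ (D i) - φ θ (D' i))) := by gcongr
    _ ≤ 1 / q * (gamma n s q (j + 1) * M) := by
      gcongr
      exacts [gamma_nonneg .., (le_abs_self _).trans (hM _ _)]
    _ ≤ 1 / q * (s / n * M) := by
      gcongr
      exact gamma_le hq hqs hsn j
    _ = M * s / (q * n) := by field_simp

theorem abs_sub_orderedLoss_le {a : ℝ} (ha : ∀ z, |a - φ θ z| ≤ M) (hq : 1 ≤ q) (hqs : q ≤ s)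
    (hsn : s ≤ n) (D : Fin n → Z) : |a - orderedLoss φ s q θ D| ≤ M := by
  have hq0 : (0 : ℝ) < q := by exact_mod_cast hq
  have h := abs_sum_mul_sub_sortedSum_le (w := fun j : Fin n => gamma n s q (j + 1))
    (fun j => gamma_nonneg ..) (fun i => ha (D i))
  rw [sum_gamma hqs hsn] at h
  have hfactor : a - orderedLoss φ s q θ D = (q * a -
      sortedSum (fun j : Fin n => gamma n s q (j + 1)) fun i => φ θ (D i)) / q := by
    rw [orderedLoss_eq_sortedSum]
    field_simp
  rwa [hfactor, abs_div, abs_of_pos hq0, div_le_iff₀' hq0]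

theorem empiricalLoss_le_orderedLoss (hq : 1 ≤ q) (hqs : q ≤ s) (hsn : s ≤ n) (φ : Θ → Z → ℝ)
    (θ : Θ) (D : Fin n → Z) : empiricalLoss φ θ D ≤ orderedLoss φ s q θ D := by
  have hq0 : (0 : ℝ) < q := by exact_mod_cast hq
  have hn0 : (0 : ℝ) < n := by exact_mod_cast (by lia : 0 < n)
  have h := sum_mul_sum_le_card_mul_sortedSum (gamma_antitone hq hqs) fun i => φ θ (D i)
  rw [sum_gamma hqs hsn] at h
  rwa [empiricalLoss, orderedLoss_eq_sortedSum, one_div_mul_eq_div, one_div_mul_eq_div,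
    div_le_div_iff₀ hn0 hq0, mul_comm, mul_comm (sortedSum ..)]

theorem sum_rankWeight_sub_mul (φ : Θ → Z → ℝ) (s q : ℕ) (θ : Θ) (D : Fin n → Z) :
    ∑ i, (rankWeight φ s q i θ D / (q : ℝ) - 1 / (n : ℝ)) * φ θ (D i) =
      orderedLoss φ s q θ D - empiricalLoss φ θ D := by
  simp only [sub_mul, Finset.sum_sub_distrib, orderedLoss, empiricalLoss, Finset.mul_sum]
  congr 1
  rw [← Equiv.sum_comp (orderPerm φ θ D)]
  refine Finset.sum_congr rfl fun j _ => ?_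
  simp only [rankWeight, Equiv.symm_apply_apply]
  ring

theorem gapInf_eq_iInf (φ : Θ → Z → ℝ) (s q : ℕ) (D : Fin n → Z) :
    gapInf φ s q D = ⨅ θ, (orderedLoss φ s q θ D - empiricalLoss φ θ D) :=
  iInf_congr fun θ => sum_rankWeight_sub_mul φ s q θ D

theorem gapInf_nonneg (hq : 1 ≤ q) (hqs : q ≤ s) (hsn : s ≤ n) (φ : Θ → Z → ℝ)
    (D : Fin n → Z) : 0 ≤ gapInf φ s q D := by
  rw [gapInf_eq_iInf]
  exact Real.iInf_nonneg fun θ => sub_nonneg.2 (empiricalLoss_le_orderedLoss hq hqs hsn φ θ D)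

theorem gapInf_le (hq : 1 ≤ q) (hqs : q ≤ s) (hsn : s ≤ n) (φ : Θ → Z → ℝ) (θ : Θ)
    (D : Fin n → Z) : gapInf φ s q D ≤ orderedLoss φ s q θ D - empiricalLoss φ θ D := by
  rw [gapInf_eq_iInf]
  exact ciInf_le ⟨0, Set.forall_mem_range.2 fun θ =>
    sub_nonneg.2 (empiricalLoss_le_orderedLoss hq hqs hsn φ θ D)⟩ θ

theorem gapQ_nonneg [MeasurableSpace Z] (hq : 1 ≤ q) (hqs : q ≤ s) (hsn : s ≤ n)
    (μ : Measure Z) (φ : Θ → Z → ℝ) : 0 ≤ gapQ μ φ n s q :=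
  integral_nonneg (gapInf_nonneg hq hqs hsn φ)

end Loss

section Deviation

open scoped NNReal

variable {Z Θ : Type*} [MeasurableSpace Z] {μ : Measure Z} [IsProbabilityMeasure μ] {n s q : ℕ}
  {φ : Θ → Z → ℝ}

/-- The largest amount `sup_θ (∫ φ(θ, z) dμ(z) - L_q(θ; D))` by which the ordered empirical loss
underestimates the expected loss. -/
noncomputable def maxDeviation (μ : Measure Z) (φ : Θ → Z → ℝ) (s q : ℕ) (D : Fin n → Z) : ℝ :=
  ⨆ θ, ((∫ z, φ θ z ∂μ) - orderedLoss φ s q θ D)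

theorem abs_integral_sub_le {f : Z → ℝ} (hf : Integrable f μ) {M : ℝ}
    (hM : ∀ z z', |f z - f z'| ≤ M) (z : Z) : |(∫ w, f w ∂μ) - f z| ≤ M := by
  have h := norm_integral_le_of_norm_le_const (μ := μ) (f := fun w => f w - f z)
    (ae_of_all _ fun w => hM w z)
  rw [integral_sub hf (integrable_const _)] at h
  simpa using h

theorem integral_sub_orderedLoss_le_maxDeviation (hφ : ∀ θ, Integrable (φ θ) μ) {M : ℝ}
    (hM : ∀ θ z z', |φ θ z - φ θ z'| ≤ M) (hq : 1 ≤ q) (hqs : q ≤ s) (hsn : s ≤ n)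
    (D : Fin n → Z) (θ : Θ) :
    (∫ z, φ θ z ∂μ) - orderedLoss φ s q θ D ≤ maxDeviation μ φ s q D := by
  refine le_ciSup (f := fun θ => (∫ z, φ θ z ∂μ) - orderedLoss φ s q θ D)
    ⟨M, Set.forall_mem_range.2 fun θ => ?_⟩ θ
  exact le_of_abs_le (abs_sub_orderedLoss_le (abs_integral_sub_le (hφ θ) (hM θ)) hq hqs hsn D)

theorem maxDeviation_sub_le [Nonempty Θ] (hφ : ∀ θ, Integrable (φ θ) μ) {M : ℝ}
    (hM : ∀ θ z z', |φ θ z - φ θ z'| ≤ M) (hq : 1 ≤ q) (hqs : q ≤ s) (hsn : s ≤ n)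
    {D D' : Fin n → Z} {i : Fin n} (hD : ∀ k ≠ i, D k = D' k) :
    maxDeviation μ φ s q D - maxDeviation μ φ s q D' ≤ M * s / (q * n) := by
  rw [sub_le_iff_le_add']
  refine ciSup_le fun θ => ?_
  have hdev := integral_sub_orderedLoss_le_maxDeviation hφ hM hq hqs hsn D' θ
  have hloss := orderedLoss_sub_le (hM θ) hq hqs hsn fun k hk => (hD k hk).symm
  linarith

theorem measureReal_lt_maxDeviation_sub_integral_le [Nonempty Θ] (hφ : ∀ θ, Integrable (φ θ) μ)
    {M : ℝ≥0} (hM : ∀ θ z z', |φ θ z - φ θ z'| ≤ M) (hq : 1 ≤ q) (hqs : q ≤ s) (hsn : s ≤ n)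
    (hdev : Integrable (maxDeviation μ φ s q) (Measure.pi fun _ : Fin n => μ)) {δ : ℝ}
    (hδ : 0 < δ) (hδ1 : δ ≤ 1) :
    (Measure.pi fun _ : Fin n => μ).real {D | M * s / q * √(Real.log (1 / δ) / (2 * n)) <
      maxDeviation μ φ s q D - ∫ D', maxDeviation μ φ s q D' ∂Measure.pi fun _ : Fin n => μ}
      ≤ δ := by
  have hn0 : (n : ℝ) ≠ 0 := by exact_mod_cast (by lia : n ≠ 0)
  have hdiff (i : Fin n) (x : (Fin n → Z) × Z) :
      |maxDeviation μ φ s q x.1 - maxDeviation μ φ s q (Function.update x.1 i x.2)| ≤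
        (M * s / (q * n) : ℝ≥0) := by
    push_cast
    exact abs_sub_le_iff.2
      ⟨maxDeviation_sub_le hφ hM hq hqs hsn fun k hk => (Function.update_of_ne hk ..).symm,
        maxDeviation_sub_le hφ hM hq hqs hsn fun k hk => Function.update_of_ne hk ..⟩
  have htail := measureReal_lt_le_of_hasSubgaussianMGF (hasSubgaussianMGF_of_ae_abs_sub_update_le
    hdev _ fun i => ae_of_all _ (hdiff i)) hδ hδ1
  have hvar : 2 * (∑ _ : Fin n, (M * s / (q * n) / 2) ^ 2 : ℝ≥0) * Real.log (1 / δ) =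
      (M * s / q) ^ 2 * (Real.log (1 / δ) / (2 * n)) := by
    simp only [Finset.sum_const, Finset.card_univ, Fintype.card_fin, nsmul_eq_mul]
    push_cast
    field_simp
  rwa [hvar, Real.sqrt_mul (sq_nonneg _), Real.sqrt_sq (by positivity)] at htail

end Deviation

section Symmetrization

variable {Z Θ : Type*} {n : ℕ} {φ : Θ → Z → ℝ}

theorem empiricalLoss_sub_empiricalLoss (φ : Θ → Z → ℝ) (ξ : Fin n → ℤˣ) (D D' : Fin n → Z)
    (θ : Θ) : empiricalLoss φ θ D' - empiricalLoss φ θ D =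
      signedAverage φ ξ ({i | ξ i = 1}.piecewise D' D) θ +
        signedAverage φ (-ξ) ({i | ξ i = 1}.piecewise D D') θ := by
  simp only [empiricalLoss, signedAverage, ← mul_sub, ← mul_add, ← Finset.sum_sub_distrib,
    ← Finset.sum_add_distrib]
  congr 1
  refine Finset.sum_congr rfl fun i _ => ?_
  rcases Int.units_eq_one_or (ξ i) with hi | hi <;> simp [Set.piecewise, hi] <;> ring

variable [MeasurableSpace Z] {μ : Measure Z} [IsProbabilityMeasure μ]

theorem integrable_empiricalLoss {θ : Θ} (hφ : Integrable (φ θ) μ) :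
    Integrable (empiricalLoss φ θ) (Measure.pi fun _ : Fin n => μ) :=
  (integrable_finsetSum _ fun i _ => (measurePreserving_eval
    (fun _ : Fin n => μ) i).integrable_comp_of_integrable hφ).const_mul _

theorem integral_empiricalLoss (hn : n ≠ 0) {θ : Θ} (hφ : Integrable (φ θ) μ) :
    ∫ D, empiricalLoss φ θ D ∂(Measure.pi fun _ : Fin n => μ) = ∫ z, φ θ z ∂μ := by
  have heval (i : Fin n) := measurePreserving_eval (fun _ : Fin n => μ) i
  have hi (i : Fin n) : ∫ D, φ θ (D i) ∂(Measure.pi fun _ : Fin n => μ) = ∫ z, φ θ z ∂μ :=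
    integral_comp_of_measurePreserving (heval i) hφ.aestronglyMeasurable
  have hint (i : Fin n) : Integrable (fun D => φ θ (D i)) (Measure.pi fun _ : Fin n => μ) :=
    (heval i).integrable_comp_of_integrable hφ
  simp only [empiricalLoss]
  rw [integral_const_mul, integral_finsetSum _ fun i _ => hint i]
  simp only [hi, Finset.sum_const, Finset.card_univ, Fintype.card_fin, nsmul_eq_mul]
  field_simp

theorem ae_integral_sub_empiricalLoss_le (hφ : ∀ θ, Integrable (φ θ) μ) (hn : n ≠ 0)
    {K : (Fin n → Z) × (Fin n → Z) → ℝ}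
    (hK : Integrable K ((Measure.pi fun _ : Fin n => μ).prod (Measure.pi fun _ : Fin n => μ)))
    (h : ∀ᵐ x ∂(Measure.pi fun _ : Fin n => μ).prod (Measure.pi fun _ : Fin n => μ),
      ∀ θ, empiricalLoss φ θ x.2 - empiricalLoss φ θ x.1 ≤ K x) :
    ∀ᵐ D ∂(Measure.pi fun _ : Fin n => μ), ∀ θ, (∫ z, φ θ z ∂μ) - empiricalLoss φ θ D ≤
      ∫ D', K (D, D') ∂(Measure.pi fun _ : Fin n => μ) := by
  filter_upwards [Measure.ae_ae_of_ae_prod h, hK.prod_right_ae] with D hD hKD θ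
  have hemp := integrable_empiricalLoss (n := n) (hφ θ)
  calc (∫ z, φ θ z ∂μ) - empiricalLoss φ θ D
      = ∫ D', (empiricalLoss φ θ D' - empiricalLoss φ θ D) ∂(Measure.pi fun _ => μ) := by
        rw [integral_sub hemp (integrable_const _), integral_empiricalLoss hn (hφ θ)]
        simp
    _ ≤ ∫ D', K (D, D') ∂(Measure.pi fun _ => μ) :=
        integral_mono_ae (hemp.sub (integrable_const _)) hKD (hD.mono fun D' h => h θ)

theorem integral_le_integral_iSup_signedAverage_add (hφ : ∀ θ, Integrable (φ θ) μ) (hn : n ≠ 0)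
    (hRfin : ∀ ξ : Fin n → ℤˣ, ∀ᵐ D ∂(Measure.pi fun _ : Fin n => μ),
      BddAbove (Set.range fun θ => signedAverage φ ξ D θ))
    (hRint : ∀ ξ : Fin n → ℤˣ, Integrable (fun D : Fin n → Z => ⨆ θ, signedAverage φ ξ D θ)
      (Measure.pi fun _ : Fin n => μ))
    {ψ : (Fin n → Z) → ℝ} (hψ : Integrable ψ (Measure.pi fun _ : Fin n => μ))
    (hψ_le : ∀ D b, (∀ θ, (∫ z, φ θ z ∂μ) - empiricalLoss φ θ D ≤ b) → ψ D ≤ b)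
    (ξ : Fin n → ℤˣ) :
    ∫ D, ψ D ∂(Measure.pi fun _ : Fin n => μ) ≤
      ∫ D, ⨆ θ, signedAverage φ ξ D θ ∂(Measure.pi fun _ : Fin n => μ) +
        ∫ D, ⨆ θ, signedAverage φ (-ξ) D θ ∂(Measure.pi fun _ : Fin n => μ) := by
  set π := Measure.pi fun _ : Fin n => μ
  have hright : MeasurePreserving _ (π.prod π) π :=
    measurePreserving_piecewise (fun _ : Fin n => μ) {i | ξ i = 1}
  have hleft := hright.comp Measure.measurePreserving_swap
  set K₁ : (Fin n → Z) × (Fin n → Z) → ℝ := fun x =>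
    ⨆ θ, signedAverage φ ξ ({i | ξ i = 1}.piecewise x.2 x.1) θ
  set K₂ : (Fin n → Z) × (Fin n → Z) → ℝ := fun x =>
    ⨆ θ, signedAverage φ (-ξ) ({i | ξ i = 1}.piecewise x.1 x.2) θ
  have hK₁ : Integrable K₁ (π.prod π) := hleft.integrable_comp_of_integrable (hRint ξ)
  have hK₂ : Integrable K₂ (π.prod π) := hright.integrable_comp_of_integrable (hRint (-ξ))
  have hK := hK₁.add hK₂
  have hghost : ∀ᵐ x ∂π.prod π, ∀ θ,
      empiricalLoss φ θ x.2 - empiricalLoss φ θ x.1 ≤ (K₁ + K₂) x := by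
    filter_upwards [hleft.quasiMeasurePreserving.ae (hRfin ξ),
      hright.quasiMeasurePreserving.ae (hRfin (-ξ))] with x h₁ h₂ θ
    rw [empiricalLoss_sub_empiricalLoss φ ξ]
    exact add_le_add (le_ciSup h₁ θ) (le_ciSup h₂ θ)
  have hψK : ∀ᵐ D ∂π, ψ D ≤ ∫ D', (K₁ + K₂) (D, D') ∂π :=
    (ae_integral_sub_empiricalLoss_le hφ hn hK hghost).mono fun D => hψ_le D _
  calc ∫ D, ψ D ∂π ≤ ∫ D, ∫ D', (K₁ + K₂) (D, D') ∂π ∂π :=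
        integral_mono_ae hψ hK.integral_prod_left hψK
    _ = ∫ x, K₁ x ∂π.prod π + ∫ x, K₂ x ∂π.prod π :=
        (integral_prod _ hK).symm.trans (integral_add hK₁ hK₂)
    _ = _ := congrArg₂ (· + ·)
        (integral_comp_of_measurePreserving hleft (hRint ξ).aestronglyMeasurable)
        (integral_comp_of_measurePreserving hright (hRint (-ξ)).aestronglyMeasurable)

theorem integral_le_two_mul_rademacherComplexity (hφ : ∀ θ, Integrable (φ θ) μ) (hn : n ≠ 0)
    (hRfin : ∀ ξ : Fin n → ℤˣ, ∀ᵐ D ∂(Measure.pi fun _ : Fin n => μ),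
      BddAbove (Set.range fun θ => signedAverage φ ξ D θ))
    (hRint : ∀ ξ : Fin n → ℤˣ, Integrable (fun D : Fin n → Z => ⨆ θ, signedAverage φ ξ D θ)
      (Measure.pi fun _ : Fin n => μ))
    {ψ : (Fin n → Z) → ℝ} (hψ : Integrable ψ (Measure.pi fun _ : Fin n => μ))
    (hψ_le : ∀ D b, (∀ θ, (∫ z, φ θ z ∂μ) - empiricalLoss φ θ D ≤ b) → ψ D ≤ b) :
    ∫ D, ψ D ∂(Measure.pi fun _ : Fin n => μ) ≤ 2 * rademacherComplexity μ φ n := by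
  set r : (Fin n → ℤˣ) → ℝ := fun ξ =>
    ∫ D, ⨆ θ, signedAverage φ ξ D θ ∂(Measure.pi fun _ : Fin n => μ)
  have hr : rademacherComplexity μ φ n = (2 ^ n)⁻¹ * ∑ ξ, r ξ := by
    rw [rademacherComplexity, integral_const_mul, integral_finsetSum _ fun ξ _ => hRint ξ]
  have hneg : ∑ ξ, r (-ξ) = ∑ ξ, r ξ := Equiv.sum_comp (Equiv.neg (Fin n → ℤˣ)) r
  have hsum : 2 ^ n * ∫ D, ψ D ∂(Measure.pi fun _ : Fin n => μ) ≤ ∑ ξ, (r ξ + r (-ξ)) := by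
    simpa using Finset.card_nsmul_le_sum Finset.univ _ _ fun ξ _ =>
      integral_le_integral_iSup_signedAverage_add hφ hn hRfin hRint hψ hψ_le ξ
  rw [Finset.sum_add_distrib, hneg, ← le_inv_mul_iff₀ (by positivity)] at hsum
  linarith

theorem integral_maxDeviation_le [Nonempty Θ] {s q : ℕ} (hφ : ∀ θ, Integrable (φ θ) μ)
    (hq : 1 ≤ q) (hqs : q ≤ s) (hsn : s ≤ n)
    (hRfin : ∀ ξ : Fin n → ℤˣ, ∀ᵐ D ∂(Measure.pi fun _ : Fin n => μ),
      BddAbove (Set.range fun θ => signedAverage φ ξ D θ))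
    (hRint : ∀ ξ : Fin n → ℤˣ, Integrable (fun D : Fin n → Z => ⨆ θ, signedAverage φ ξ D θ)
      (Measure.pi fun _ : Fin n => μ))
    (hgap : Integrable (gapInf φ s q) (Measure.pi fun _ : Fin n => μ))
    (hdev : Integrable (maxDeviation μ φ s q) (Measure.pi fun _ : Fin n => μ)) :
    ∫ D, maxDeviation μ φ s q D ∂(Measure.pi fun _ : Fin n => μ) ≤
      2 * rademacherComplexity μ φ n - gapQ μ φ n s q := by
  have h := integral_le_two_mul_rademacherComplexity hφ (by lia) hRfin hRint (hdev.add hgap)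
    fun D b hb => by
      rw [Pi.add_apply, ← le_sub_iff_add_le]
      refine ciSup_le fun θ => ?_
      have hgap_le := gapInf_le hq hqs hsn φ θ D
      linarith [hb θ]
  rw [integral_add' hdev hgap] at h
  exact le_sub_iff_add_le.2 h

end Symmetrization

end OrderedLoss

open OrderedLoss in
/-- Generalization bound for the ordered empirical loss. That the Rademacher supremum is an
integrable function of `(ξ, D)` is expressed, for every sign vector `ξ`, by `hRfin` (the supremum
is finite for almost every `D`, so that `⨆` is the true supremum there) and `hRint`. The supremum
in `hΦ` and the infimum in `hQ` are always over bounded sets, because of `hM_osc`. -/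
theorem stmt_19
    {Z : Type*} [MeasurableSpace Z] (μ : Measure Z) [IsProbabilityMeasure μ]
    {Θ : Type*} [Nonempty Θ]
    (M : ℝ) (hM : 0 ≤ M)
    (φ : Θ → Z → ℝ)
    (hφ_meas : ∀ θ, Measurable (φ θ))
    (hφ_bdd : ∀ θ, ∃ C : ℝ, ∀ z, |φ θ z| ≤ C)
    (hM_osc : ∀ θ z z', |φ θ z - φ θ z'| ≤ M)
    (n s q : ℕ) (hq : 1 ≤ q) (hqs : q ≤ s) (hsn : s ≤ n)
    (hRfin : ∀ ξ : Fin n → ℤˣ, ∀ᵐ D ∂(Measure.pi fun _ : Fin n => μ),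
      BddAbove (Set.range fun θ : Θ => OrderedLoss.signedAverage φ ξ D θ))
    (hRint : ∀ ξ : Fin n → ℤˣ,
      Integrable (fun D : Fin n → Z => ⨆ θ : Θ, OrderedLoss.signedAverage φ ξ D θ)
        (Measure.pi fun _ : Fin n => μ))
    (hQ : Integrable (fun D : Fin n → Z => OrderedLoss.gapInf φ s q D)
      (Measure.pi fun _ : Fin n => μ))
    (hΦ : Integrable
      (fun D : Fin n → Z => ⨆ θ : Θ, ((∫ z, φ θ z ∂μ) - OrderedLoss.orderedLoss φ s q θ D))
      (Measure.pi fun _ : Fin n => μ)) :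
    0 ≤ OrderedLoss.gapQ μ φ n s q ∧
      ∀ δ : ℝ, 0 < δ → δ < 1 →
        ENNReal.ofReal (1 - δ) ≤
          (Measure.pi fun _ : Fin n => μ) {D : Fin n → Z | ∀ θ : Θ,
            ∫ z, φ θ z ∂μ ≤
              OrderedLoss.orderedLoss φ s q θ D
                + 2 * OrderedLoss.rademacherComplexity μ φ n
                + (M * (s : ℝ) / (q : ℝ)) * Real.sqrt (Real.log (1 / δ) / (2 * (n : ℝ)))
                - OrderedLoss.gapQ μ φ n s q} := by
  lift M to NNReal using hM
  have hφ (θ : Θ) : Integrable (φ θ) μ := by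
    obtain ⟨C, hC⟩ := hφ_bdd θ
    exact .of_bound (hφ_meas θ).aestronglyMeasurable C (ae_of_all _ hC)
  refine ⟨gapQ_nonneg hq hqs hsn μ φ, fun δ hδ hδ1 => ?_⟩
  have hmean := integral_maxDeviation_le hφ hq hqs hsn hRfin hRint hQ hΦ
  have htail := measureReal_lt_maxDeviation_sub_integral_le hφ hM_osc hq hqs hsn hΦ hδ hδ1.le
  refine ofReal_one_sub_le_measure_of_measureReal_compl_le
    ((measureReal_mono (Set.compl_subset_comm.1 fun D hD θ => ?_)).trans htail)
  rw [Set.mem_compl_iff, Set.mem_ofPred_eq, not_lt] at hD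
  have hθ := integral_sub_orderedLoss_le_maxDeviation hφ hM_osc hq hqs hsn D θ
  linarith
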